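/- For α > -1/2, λ ≥ 0 and every n ≥ 1, all zeros of the monic Gegenbauer–Sobolev polynomial Q_{n,λ}^{(α)} are real and simple; that is, Q_{n,λ}^{(α)} has exactly n distinct real roots. -/

import Mathlib

open Polynomial MeasureTheory Real Set

/-- The Gegenbauer inner product `∫ f g (1-x²)^{α-1/2}` on `(-1,1)`. -/
noncomputable def gegInner (α : ℝ) (f g : Polynomial ℝ) : ℝ :=
  ∫ x in Set.Ioo (-1 : ℝ) 1, f.eval x * g.eval x * (1 - x ^ 2) ^ (α - 1/2)

/-- `C` is the monic Gegenbauer polynomial of degree `n` for parameter `α`. -/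
def IsMonicGegenbauer (α : ℝ) (n : ℕ) (C : Polynomial ℝ) : Prop :=
  C.Monic ∧ C.natDegree = n ∧
    ∀ p : Polynomial ℝ, p.degree < (n : ℕ) → gegInner α C p = 0

/-- The Gegenbauer–Sobolev inner product. -/
noncomputable def sobInner (α lam : ℝ) (f g : Polynomial ℝ) : ℝ :=
  gegInner α f g + lam * gegInner α (derivative f) (derivative g)

/-- `Q` is the monic Gegenbauer–Sobolev polynomial of degree `n`. -/
def IsMonicGegSobolev (α lam : ℝ) (n : ℕ) (Q : Polynomial ℝ) : Prop :=
  Q.Monic ∧ Q.natDegree = n ∧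
    ∀ p : Polynomial ℝ, p.degree < (n : ℕ) → sobInner α lam Q p = 0

/-!
By uniqueness `Q` has the parity of its degree, so `Q = x ^ ε * q (x ^ 2 - 1)` with `ε ≤ 1`. Let
`J` be integration of polynomials in `s = x ^ 2 - 1` against the measure on `(-1, 0)` induced by
`x ^ (2 * ε) * (1 - x ^ 2) ^ (α - 1 / 2)`, and write `P_k = x ^ ε * (x ^ 2 - 1) ^ k`.
Orthogonality turns the moments of `q` into `J (q * s ^ k) = -lam * ⟨Q', P_k'⟩`, and integration
by parts of the right-hand side yields a second-order recurrence with nonnegative coefficients, so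
all these moments have the same sign. A polynomial with all its zeros in `[-1, 0]` has nonnegative
coefficients. Hence, if `P` has as zeros the sign changes of `q` in `(-1, 0)`, then
`J (q * P * (s + 1))` and `J (q * P * s)` cannot have opposite signs, which forces
`deg q ≤ deg P + 1`. The zero of `q` that may remain exceeds `-1` because `-lam * ⟨Q', Q'⟩ ≤ 0`,
and each zero `b > -1` of `q` gives the two zeros `±√(1 + b)` of `Q`.
-/

section SignChanges

/-- The values of `p` on `I` are all nonnegative or all nonpositive: `p` does not change sign
on `I`. Zeros are allowed. -/
def NoSignChangeOn (p : ℝ[X]) (I : Set ℝ) : Prop :=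
  (∀ x ∈ I, 0 ≤ p.eval x) ∨ ∀ x ∈ I, p.eval x ≤ 0

theorem noSignChangeOn_of_forall_not_isRoot {p : ℝ[X]} {I : Set ℝ} (hI : IsPreconnected I)
    (hp : ∀ x ∈ I, ¬p.IsRoot x) : NoSignChangeOn p I := by
  by_contra h
  simp only [NoSignChangeOn, not_or, not_forall, not_le, exists_prop] at h
  obtain ⟨⟨x, hx, hpx⟩, y, hy, hpy⟩ := h
  obtain ⟨z, hz, hpz⟩ := hI.intermediate_value hx hy p.continuousOn ⟨hpx.le, hpy.le⟩
  exact hp z hz hpz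

theorem NoSignChangeOn.sq_mul {p : ℝ[X]} {I : Set ℝ} (hp : NoSignChangeOn p I) (r : ℝ[X]) :
    NoSignChangeOn (r ^ 2 * p) I := by
  simp only [NoSignChangeOn, eval_mul, eval_pow] at hp ⊢
  exact hp.imp (fun h x hx ↦ mul_nonneg (sq_nonneg _) (h x hx))
    fun h x hx ↦ mul_nonpos_of_nonneg_of_nonpos (sq_nonneg _) (h x hx)

theorem notMem_Ioo_of_noSignChangeOn_sq_mul_X_sub_C {p : ℝ[X]} {a b c : ℝ} (hp : p ≠ 0)
    (h : NoSignChangeOn (p ^ 2 * (X - C c)) (Ioo a b)) : c ∉ Ioo a b := by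
  intro hc
  have exists_nonroot {u v : ℝ} (huv : u < v) : ∃ x ∈ Ioo u v, 0 < p.eval x ^ 2 := by
    by_contra! hroot
    refine hp (eq_zero_of_infinite_isRoot p ((Ioo_infinite huv).mono fun x hx ↦ ?_))
    exact sq_nonpos_iff _ |>.mp (hroot x hx)
  obtain ⟨x, hx, hpx⟩ := exists_nonroot hc.1
  obtain ⟨y, hy, hpy⟩ := exists_nonroot hc.2
  simp only [NoSignChangeOn, eval_mul, eval_pow, eval_sub, eval_X, eval_C] at h
  rcases h with h | h
  · exact (h x ⟨hx.1, hx.2.trans hc.2⟩).not_gt (mul_neg_of_pos_of_neg hpx (sub_neg.mpr hx.2))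
  · exact (h y ⟨hc.1.trans hy.1, hy.2⟩).not_gt (mul_pos hpy (sub_pos.mpr hy.1))

theorem exists_eq_prod_X_sub_C_mul_sq_mul {R : Type*} [CommRing R] [IsDomain R] (I : Set R)
    {q : R[X]} (hq : q ≠ 0) :
    ∃ (A : Finset R) (r g : R[X]), ↑A ⊆ I ∧ (∀ x ∈ I, ¬g.IsRoot x) ∧
      q = (∏ a ∈ A, (X - C a)) * r ^ 2 * g := by
  classical
  induction hn : q.natDegree generalizing q with
  | zero =>
    refine ⟨∅, 1, q, by simp, fun x _ hx ↦ hq ?_, by simp⟩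
    rw [eq_C_of_natDegree_eq_zero hn] at hx ⊢
    simpa using hx
  | succ n ih =>
    by_cases hroot : ∃ a ∈ I, q.IsRoot a
    · obtain ⟨a, haI, ha⟩ := hroot
      obtain ⟨p, rfl⟩ := dvd_iff_isRoot.mpr ha
      have hp : p ≠ 0 := right_ne_zero_of_mul hq
      rw [natDegree_mul (X_sub_C_ne_zero a) hp, natDegree_X_sub_C] at hn
      obtain ⟨A, r, g, hA, hg, rfl⟩ := ih hp (by omega)
      by_cases haA : a ∈ A
      · refine ⟨A.erase a, (X - C a) * r, g, by grind, hg, ?_⟩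
        rw [← Finset.mul_prod_erase A _ haA]
        ring
      · refine ⟨insert a A, r, g, by grind, hg, ?_⟩
        rw [Finset.prod_insert haA]
        ring
    · exact ⟨∅, 1, q, by simp, by simpa using hroot, by simp⟩

/-- `A` consists of the points where `q` changes sign in `I`. -/
theorem exists_finset_dvd_noSignChangeOn {I : Set ℝ} (hI : IsPreconnected I) {q : ℝ[X]}
    (hq : q ≠ 0) :
    ∃ A : Finset ℝ, ↑A ⊆ I ∧ ∏ a ∈ A, (X - C a) ∣ q ∧
      NoSignChangeOn (q * ∏ a ∈ A, (X - C a)) I := by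
  obtain ⟨A, r, g, hA, hg, rfl⟩ := exists_eq_prod_X_sub_C_mul_sq_mul I hq
  refine ⟨A, hA, ⟨r ^ 2 * g, mul_assoc _ _ _⟩, ?_⟩
  convert (noSignChangeOn_of_forall_not_isRoot hI hg).sq_mul ((∏ a ∈ A, (X - C a)) * r) using 1
  ring

end SignChanges

section NonnegativeCoefficients

variable {R : Type*}

theorem coeff_mul_nonneg [Semiring R] [PartialOrder R] [IsOrderedRing R] {p q : R[X]}
    (hp : ∀ k, 0 ≤ p.coeff k) (hq : ∀ k, 0 ≤ q.coeff k) (k : ℕ) : 0 ≤ (p * q).coeff k := by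
  rw [coeff_mul]
  exact Finset.sum_nonneg fun i _ ↦ mul_nonneg (hp i.1) (hq i.2)

theorem coeff_X_sub_C_nonneg [Ring R] [PartialOrder R] [IsOrderedRing R] {a : R} (ha : a ≤ 0)
    (k : ℕ) : 0 ≤ (X - C a).coeff k := by
  rcases k with _ | _ | k <;> simp [coeff_X, coeff_C, ha]

theorem coeff_prod_X_sub_C_nonneg [CommRing R] [PartialOrder R] [IsOrderedRing R] {A : Finset R}
    (hA : ∀ a ∈ A, a ≤ 0) : ∀ k, 0 ≤ (∏ a ∈ A, (X - C a)).coeff k :=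
  Finset.prod_induction _ (fun p : R[X] ↦ ∀ k, 0 ≤ p.coeff k) (fun _ _ ↦ coeff_mul_nonneg)
    (fun k ↦ by rw [coeff_one]; split_ifs <;> simp) fun a ha ↦ coeff_X_sub_C_nonneg (hA a ha)

theorem map_nonneg_of_coeff_nonneg [Semiring R] [PartialOrder R] [IsOrderedRing R]
    {N : R[X] →ₗ[R] R} {m : ℕ} (hN : ∀ k ≤ m, 0 ≤ N (X ^ k)) {p : R[X]}
    (hdeg : p.natDegree ≤ m) (hp : ∀ k, 0 ≤ p.coeff k) : 0 ≤ N p := by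
  rw [p.as_sum_range_C_mul_X_pow, map_sum]
  refine Finset.sum_nonneg fun k hk ↦ ?_
  rw [← smul_eq_C_mul, map_smul]
  exact mul_nonneg (hp k) (hN k (by grind))

theorem map_mul_map_nonneg_of_coeff_nonneg [CommRing R] [PartialOrder R] [IsOrderedRing R]
    {N : R[X] →ₗ[R] R} {m : ℕ}
    (hN : (∀ k ≤ m, 0 ≤ N (X ^ k)) ∨ ∀ k ≤ m, N (X ^ k) ≤ 0) {p q : R[X]}
    (hpm : p.natDegree ≤ m) (hp : ∀ k, 0 ≤ p.coeff k)
    (hqm : q.natDegree ≤ m) (hq : ∀ k, 0 ≤ q.coeff k) : 0 ≤ N p * N q := by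
  rcases hN with hN | hN
  · exact mul_nonneg (map_nonneg_of_coeff_nonneg hN hpm hp) (map_nonneg_of_coeff_nonneg hN hqm hq)
  · have hN' : ∀ k ≤ m, 0 ≤ (-N) (X ^ k) := fun k hk ↦ neg_nonneg.mpr (hN k hk)
    rw [← neg_mul_neg]
    exact mul_nonneg (map_nonneg_of_coeff_nonneg hN' hpm hp)
      (map_nonneg_of_coeff_nonneg hN' hqm hq)

end NonnegativeCoefficients

section Recurrences

variable {R : Type*}

theorem nonneg_of_recurrence [Semiring R] [PartialOrder R] [IsOrderedRing R] {ν a b : ℕ → R}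
    {m : ℕ} (ha : ∀ k, 0 ≤ a k) (hb : ∀ k, 0 ≤ b k) (h0 : 0 ≤ ν 0) (h1 : 0 < m → 0 ≤ ν 1)
    (hrec : ∀ k, k + 2 ≤ m → ν (k + 2) = a k * ν k + b k * ν (k + 1)) :
    ∀ k ≤ m, 0 ≤ ν k := by
  intro k
  induction k using Nat.twoStepInduction with
  | zero => exact fun _ ↦ h0
  | one => exact h1
  | more k ih ih' =>
    intro hk
    rw [hrec k hk]
    exact add_nonneg (mul_nonneg (ha k) (ih (by omega))) (mul_nonneg (hb k) (ih' (by omega)))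

theorem sameSign_of_recurrence [CommRing R] [LinearOrder R] [IsStrictOrderedRing R] {ν a b : ℕ → R}
    {m : ℕ} (ha : ∀ k, 0 ≤ a k) (hb : ∀ k, 0 ≤ b k) (h01 : 0 < m → 0 ≤ ν 0 * ν 1)
    (hrec : ∀ k, k + 2 ≤ m → ν (k + 2) = a k * ν k + b k * ν (k + 1)) :
    (∀ k ≤ m, 0 ≤ ν k) ∨ ∀ k ≤ m, ν k ≤ 0 := by
  have hinit : 0 ≤ ν 0 ∧ (0 < m → 0 ≤ ν 1) ∨ ν 0 ≤ 0 ∧ (0 < m → ν 1 ≤ 0) := by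
    rcases m.eq_zero_or_pos with rfl | hm
    · simpa using le_total 0 (ν 0)
    · simpa [hm] using mul_nonneg_iff.mp (h01 hm)
  refine hinit.imp (fun h ↦ nonneg_of_recurrence ha hb h.1 h.2 hrec) fun h k hk ↦ ?_
  rw [← neg_nonneg]
  refine nonneg_of_recurrence (ν := fun k ↦ -ν k) ha hb (neg_nonneg.mpr h.1)
    (fun hm ↦ neg_nonneg.mpr (h.2 hm)) (fun k hk ↦ ?_) k hk
  rw [hrec k hk]
  ring

end Recurrences

section Functionals

/-- `J` is strictly positive on the nonzero polynomials that are nonnegative on `I`, as is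
integration against a positive weight on `I`. -/
def IsPositiveOn (J : ℝ[X] →ₗ[ℝ] ℝ) (I : Set ℝ) : Prop :=
  ∀ p : ℝ[X], p ≠ 0 → (∀ x ∈ I, 0 ≤ p.eval x) → 0 < J p

variable {J : ℝ[X] →ₗ[ℝ] ℝ}

theorem IsPositiveOn.map_neg_of_eval_nonpos {I : Set ℝ} (hJ : IsPositiveOn J I) {p : ℝ[X]}
    (hp : p ≠ 0) (hpI : ∀ x ∈ I, p.eval x ≤ 0) : J p < 0 := by
  have := hJ (-p) (neg_ne_zero.mpr hp) fun x hx ↦ by simpa using hpI x hx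
  simpa using this

theorem IsPositiveOn.map_mul_X_sub_C_mul_neg {a b : ℝ} (hJ : IsPositiveOn J (Ioo a b)) {p : ℝ[X]}
    (hp : p ≠ 0) (hpI : NoSignChangeOn p (Ioo a b)) :
    J (p * (X - C a)) * J (p * (X - C b)) < 0 := by
  have hpa : p * (X - C a) ≠ 0 := mul_ne_zero hp (X_sub_C_ne_zero a)
  have hpb : p * (X - C b) ≠ 0 := mul_ne_zero hp (X_sub_C_ne_zero b)
  have ha : ∀ x ∈ Ioo a b, 0 ≤ x - a := fun x hx ↦ sub_nonneg.mpr hx.1.le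
  have hb : ∀ x ∈ Ioo a b, x - b ≤ 0 := fun x hx ↦ sub_nonpos.mpr hx.2.le
  rcases hpI with h | h
  · refine mul_neg_of_pos_of_neg (hJ _ hpa fun x hx ↦ ?_)
      (hJ.map_neg_of_eval_nonpos hpb fun x hx ↦ ?_)
    · simpa using mul_nonneg (h x hx) (ha x hx)
    · simpa using mul_nonpos_of_nonneg_of_nonpos (h x hx) (hb x hx)
  · refine mul_neg_of_neg_of_pos (hJ.map_neg_of_eval_nonpos hpa fun x hx ↦ ?_)
      (hJ _ hpb fun x hx ↦ ?_)
    · simpa using mul_nonpos_of_nonpos_of_nonneg (h x hx) (ha x hx)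
    · simpa using mul_nonneg_of_nonpos_of_nonpos (h x hx) (hb x hx)

variable {N : ℝ[X] →ₗ[ℝ] ℝ} {a : ℝ} {A : Finset ℝ}

theorem natDegree_le_card_add_one_of_noSignChangeOn (ha : a < 0) (hJ : IsPositiveOn J (Ioo a 0))
    {q : ℝ[X]} (hq : q ≠ 0) (hJN : ∀ p : ℝ[X], p.natDegree < q.natDegree → J (q * p) = N p)
    (hN : (∀ k ≤ q.natDegree, 0 ≤ N (X ^ k)) ∨ ∀ k ≤ q.natDegree, N (X ^ k) ≤ 0)
    (hA : ∀ x ∈ A, x ≤ 0) (hqA : NoSignChangeOn (q * ∏ x ∈ A, (X - C x)) (Ioo a 0)) :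
    q.natDegree ≤ A.card + 1 := by
  set P := ∏ x ∈ A, (X - C x) with hPdef
  have hP : P.Monic := monic_prod_X_sub_C _ _
  by_contra! hlt
  have hdeg (b : ℝ) : (P * (X - C b)).natDegree < q.natDegree := by
    rw [hP.natDegree_mul (monic_X_sub_C b), natDegree_X_sub_C, hPdef]
    simpa using hlt
  have hcoeff {b : ℝ} (hb : b ≤ 0) : ∀ k, 0 ≤ (P * (X - C b)).coeff k :=
    coeff_mul_nonneg (coeff_prod_X_sub_C_nonneg hA) (coeff_X_sub_C_nonneg hb)
  have hneg := hJ.map_mul_X_sub_C_mul_neg (mul_ne_zero hq hP.ne_zero) hqA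
  rw [mul_assoc, mul_assoc, hJN _ (hdeg a), hJN _ (hdeg 0)] at hneg
  exact hneg.not_ge (map_mul_map_nonneg_of_coeff_nonneg hN (hdeg a).le (hcoeff ha.le) (hdeg 0).le
    (hcoeff le_rfl))

theorem lt_of_map_mul_X_sub_C_nonpos (ha : a < 0) (hJ : IsPositiveOn J (Ioo a 0)) {P : ℝ[X]}
    (hP : P.Monic) (hcoeff : ∀ k, 0 ≤ P.coeff k) {b : ℝ}
    (hJN : J (P * (X - C b) * P) = N P) (hNq : N (P * (X - C b)) ≤ 0)
    (hN : (∀ k ≤ P.natDegree + 1, 0 ≤ N (X ^ k)) ∨ ∀ k ≤ P.natDegree + 1, N (X ^ k) ≤ 0) :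
    a < b := by
  by_contra! hba
  have hNP : 0 < N P := by
    rw [← hJN]
    refine hJ _ (mul_ne_zero (mul_ne_zero hP.ne_zero (X_sub_C_ne_zero b)) hP.ne_zero) fun x hx ↦ ?_
    have hx : 0 ≤ x - b := by linarith [hx.1]
    simpa [mul_right_comm] using mul_nonneg (mul_self_nonneg (P.eval x)) hx
  have hNPX : 0 ≤ N (P * X) := by
    refine nonneg_of_mul_nonneg_right (map_mul_map_nonneg_of_coeff_nonneg hN (Nat.le_succ _) hcoeff
      (natDegree_mul_X hP.ne_zero).le ?_) hNP
    simpa using coeff_mul_nonneg hcoeff (coeff_X_sub_C_nonneg (le_refl (0 : ℝ)))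
  rw [mul_sub, map_sub, mul_comm P (C b), ← smul_eq_C_mul, map_smul, smul_eq_mul] at hNq
  nlinarith

/-- The zeros of `q` other than the sign changes in `(a, 0)` number at most one, since otherwise
`N` would take values of opposite sign at two polynomials with nonnegative coefficients. Such an
extra zero is at least `0`: if it were at most `a`, then `N q` would be positive. -/
theorem exists_eq_prod_X_sub_C_of_moments_sameSign (ha : a < 0) (hJ : IsPositiveOn J (Ioo a 0))
    {q : ℝ[X]} (hq : q.Monic) (hJN : ∀ p : ℝ[X], p.natDegree < q.natDegree → J (q * p) = N p)
    (hNq : N q ≤ 0)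
    (hN : (∀ k ≤ q.natDegree, 0 ≤ N (X ^ k)) ∨ ∀ k ≤ q.natDegree, N (X ^ k) ≤ 0) :
    ∃ B : Finset ℝ, (∀ b ∈ B, a < b) ∧ q = ∏ b ∈ B, (X - C b) := by
  classical
  obtain ⟨A, hA, ⟨g, hg⟩, hqA⟩ := exists_finset_dvd_noSignChangeOn isPreconnected_Ioo hq.ne_zero
  have hA0 : ∀ x ∈ A, x ≤ 0 := fun x hx ↦ (hA hx).2.le
  have hcard := natDegree_le_card_add_one_of_noSignChangeOn ha hJ hq.ne_zero hJN hN hA0 hqA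
  set P := ∏ x ∈ A, (X - C x) with hPdef
  have hP : P.Monic := monic_prod_X_sub_C _ _
  have hPdeg : P.natDegree = A.card := by simp [hPdef]
  have hgm : g.Monic := hP.of_mul_monic_left (hg ▸ hq)
  have hdeg : q.natDegree = P.natDegree + g.natDegree := hg ▸ hP.natDegree_mul hgm
  obtain hg0 | hg1 : g.natDegree = 0 ∨ g.natDegree = 1 := by omega
  · refine ⟨A, fun b hb ↦ (hA hb).1, ?_⟩
    rw [hg, eq_one_of_monic_natDegree_zero hgm hg0, mul_one]
  · obtain ⟨b, rfl⟩ : ∃ b, g = X - C b := ⟨-g.coeff 0, by simpa using hgm.eq_X_add_C hg1⟩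
    rw [hg1] at hdeg
    have hab : a < b := lt_of_map_mul_X_sub_C_nonpos ha hJ hP (coeff_prod_X_sub_C_nonneg hA0)
      (hg ▸ hJN P (by omega)) (hg ▸ hNq) (hdeg ▸ hN)
    have hb : b ∉ Ioo a 0 := notMem_Ioo_of_noSignChangeOn_sq_mul_X_sub_C hP.ne_zero <| by
      rwa [hg, show P * (X - C b) * P = P ^ 2 * (X - C b) by ring] at hqA
    refine ⟨insert b A, ?_, ?_⟩
    · exact Finset.forall_mem_insert _ _ _ |>.mpr ⟨hab, fun x hx ↦ (hA hx).1⟩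
    · rw [Finset.prod_insert fun hbA ↦ hb (hA hbA), mul_comm, hg]

end Functionals

section GegenbauerWeight

variable {α : ℝ}

theorem intervalIntegrable_one_sub_sq_rpow {β : ℝ} (hβ : -1 < β) :
    IntervalIntegrable (fun x : ℝ ↦ (1 - x ^ 2) ^ β) volume (-1) 1 := by
  have right : IntervalIntegrable (fun x : ℝ ↦ (1 - x ^ 2) ^ β) volume 0 1 := by
    have hsub : IntervalIntegrable (fun x : ℝ ↦ (1 - x) ^ β) volume 0 1 := by
      simpa using (intervalIntegral.intervalIntegrable_rpow' (a := 1) (b := 0) hβ).comp_sub_left 1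
    have hadd : ContinuousOn (fun x : ℝ ↦ (1 + x) ^ β) (uIcc 0 1) := by
      refine ContinuousOn.rpow_const (by fun_prop) fun x hx ↦ Or.inl ?_
      rw [uIcc_of_le zero_le_one] at hx
      linarith [hx.1]
    refine (hsub.mul_continuousOn hadd).congr_uIoo fun x hx ↦ ?_
    rw [uIoo_of_le zero_le_one] at hx
    simp only
    rw [← mul_rpow (by linarith [hx.2]) (by linarith [hx.1])]
    ring_nf
  have left : IntervalIntegrable (fun x : ℝ ↦ (1 - x ^ 2) ^ β) volume (-1) 0 := by
    rw [IntervalIntegrable.iff_comp_neg]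
    simpa using right.symm
  exact left.trans right

theorem integrableOn_eval_mul_gegWeight (hα : -1 / 2 < α) (p : ℝ[X]) :
    IntegrableOn (fun x ↦ p.eval x * (1 - x ^ 2) ^ (α - 1 / 2)) (Ioo (-1) 1) := by
  rw [← intervalIntegrable_iff_integrableOn_Ioo_of_le (by norm_num)]
  exact (intervalIntegrable_one_sub_sq_rpow (by linarith)).continuousOn_mul p.continuousOn

/-- Integration against the Gegenbauer weight, as a linear functional on polynomials. The bound
on `α` is an argument because linearity needs integrability. -/
noncomputable def gegIntegral (hα : -1 / 2 < α) : ℝ[X] →ₗ[ℝ] ℝ where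
  toFun p := ∫ x in Ioo (-1 : ℝ) 1, p.eval x * (1 - x ^ 2) ^ (α - 1 / 2)
  map_add' p q := by
    simp only [eval_add, add_mul]
    exact integral_add (integrableOn_eval_mul_gegWeight hα p) (integrableOn_eval_mul_gegWeight hα q)
  map_smul' c p := by
    simp only [eval_smul, smul_eq_mul, mul_assoc, RingHom.id_apply]
    exact integral_const_mul _ _

theorem gegIntegral_apply (hα : -1 / 2 < α) (p : ℝ[X]) :
    gegIntegral hα p = ∫ x in Ioo (-1 : ℝ) 1, p.eval x * (1 - x ^ 2) ^ (α - 1 / 2) :=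
  rfl

theorem gegIntegral_mul (hα : -1 / 2 < α) (f g : ℝ[X]) :
    gegIntegral hα (f * g) = gegInner α f g := by
  simp only [gegIntegral_apply, gegInner, eval_mul]

theorem isPositiveOn_gegIntegral (hα : -1 / 2 < α) :
    IsPositiveOn (gegIntegral hα) (Ioo (-1) 1) := by
  intro p hp hpos
  have weight_pos : ∀ x ∈ Ioo (-1 : ℝ) 1, 0 < (1 - x ^ 2) ^ (α - 1 / 2) := fun x hx ↦
    rpow_pos_of_pos (by nlinarith [hx.1, hx.2]) _
  have nonroots_subset : Ioo (-1 : ℝ) 1 \ (p.roots.toFinset : Set ℝ) ⊆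
      (Function.support fun x ↦ p.eval x * (1 - x ^ 2) ^ (α - 1 / 2)) ∩ Ioo (-1) 1 := by
    rintro x ⟨hx, hroot⟩
    have hpx : p.eval x ≠ 0 := by simpa [hp] using hroot
    exact ⟨mul_ne_zero hpx (weight_pos x hx).ne', hx⟩
  rw [gegIntegral_apply, setIntegral_pos_iff_support_of_nonneg_ae
    (ae_restrict_of_forall_mem measurableSet_Ioo fun x hx ↦
      mul_nonneg (hpos x hx) (weight_pos x hx).le) (integrableOn_eval_mul_gegWeight hα p)]
  refine lt_of_lt_of_le ?_ (measure_mono nonroots_subset)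
  rw [measure_sdiff_null ((Finset.finite_toSet _).measure_zero _)]
  simp

theorem gegInner_self_pos (hα : -1 / 2 < α) {f : ℝ[X]} (hf : f ≠ 0) : 0 < gegInner α f f := by
  rw [← gegIntegral_mul hα]
  exact isPositiveOn_gegIntegral hα _ (mul_ne_zero hf hf) fun x _ ↦ by
    simpa using mul_self_nonneg (f.eval x)

theorem gegInner_self_nonneg (hα : -1 / 2 < α) (f : ℝ[X]) : 0 ≤ gegInner α f f := by
  rcases eq_or_ne f 0 with rfl | hf
  · simp [gegInner]
  · exact (gegInner_self_pos hα hf).le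

theorem gegInner_comp_neg_X (f g : ℝ[X]) :
    gegInner α (f.comp (-X)) (g.comp (-X)) = gegInner α f g := by
  simp only [gegInner, ← integral_Ioc_eq_integral_Ioo,
    ← intervalIntegral.integral_of_le (show (-1 : ℝ) ≤ 1 by norm_num)]
  rw [← neg_neg (1 : ℝ), ← intervalIntegral.integral_comp_neg]
  simp

theorem hasDerivAt_one_sub_sq_rpow_mul_eval {x : ℝ} (hx : x ∈ Ioo (-1 : ℝ) 1) (p : ℝ[X]) :
    HasDerivAt (fun x ↦ (1 - x ^ 2) ^ (α + 1 / 2) * p.eval x)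
      (((1 - X ^ 2) * derivative p - C (2 * α + 1) * X * p).eval x *
        (1 - x ^ 2) ^ (α - 1 / 2)) x := by
  have hpos : 0 < 1 - x ^ 2 := by nlinarith [hx.1, hx.2]
  have hbase : HasDerivAt (fun x : ℝ ↦ 1 - x ^ 2) (-(2 * x)) x := by
    simpa using (hasDerivAt_pow 2 x).const_sub 1
  refine ((hbase.rpow_const (p := α + 1 / 2) (Or.inl hpos.ne')).mul (p.hasDerivAt x)).congr_deriv ?_
  rw [show α + 1 / 2 = α - 1 / 2 + 1 by ring, rpow_add_one hpos.ne', add_sub_cancel_right]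
  simp only [neg_mul, map_add, map_mul, map_one, eval_sub, eval_mul, eval_one, eval_pow, eval_X,
    eval_add, eval_C]
  ring

theorem gegIntegral_one_sub_sq_mul_derivative (hα : -1 / 2 < α) (p : ℝ[X]) :
    gegIntegral hα ((1 - X ^ 2) * derivative p - C (2 * α + 1) * X * p) = 0 := by
  have hcont : Continuous fun x : ℝ ↦ (1 - x ^ 2) ^ (α + 1 / 2) * p.eval x :=
    (Continuous.rpow_const (by fun_prop) fun x ↦ Or.inr (by linarith)).mul p.continuous
  rw [gegIntegral_apply, ← integral_Ioc_eq_integral_Ioo,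
    ← intervalIntegral.integral_of_le (by norm_num),
    intervalIntegral.integral_eq_sub_of_hasDerivAt_of_le (by norm_num) hcont.continuousOn
      (fun x hx ↦ hasDerivAt_one_sub_sq_rpow_mul_eval hx p)]
  · have hzero : (0 : ℝ) ^ (α + 1 / 2) = 0 := zero_rpow (by linarith)
    simp only [even_two.neg_pow, one_pow, sub_self, hzero, zero_mul]
  · rw [intervalIntegrable_iff_integrableOn_Ioo_of_le (by norm_num)]
    exact integrableOn_eval_mul_gegWeight hα _

theorem gegInner_derivative_one_sub_sq_mul (hα : -1 / 2 < α) (f r : ℝ[X]) :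
    gegInner α (derivative f) ((1 - X ^ 2) * r) =
      -gegInner α f ((1 - X ^ 2) * derivative r - C (2 * α + 1) * X * r) := by
  simp only [← gegIntegral_mul hα]
  rw [eq_neg_iff_add_eq_zero, ← map_add, ← gegIntegral_one_sub_sq_mul_derivative hα (f * r),
    derivative_mul]
  congr 1
  ring

end GegenbauerWeight

theorem exists_strictMono_eq_prod_X_sub_C {R : Type*} [CommRing R] [IsDomain R] [LinearOrder R]
    {f : R[X]} (hf : f.Monic) {S : Finset R} (hS : ∀ x ∈ S, f.eval x = 0) {n : ℕ}
    (hcard : S.card = n) (hn : f.natDegree = n) :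
    ∃ r : Fin n → R, StrictMono r ∧ f = ∏ i, (X - C (r i)) := by
  have hroots : f.roots = S.val :=
    roots_eq_of_natDegree_le_card_of_ne_zero hS (by omega) hf.ne_zero
  have hprod : ∏ x ∈ S, (X - C x) = f := by
    have := prod_multiset_X_sub_C_of_monic_of_roots_card_eq hf (by rw [hroots, hn, ← hcard]; rfl)
    rwa [hroots] at this
  refine ⟨S.orderEmbOfFin hcard, (S.orderEmbOfFin hcard).strictMono, ?_⟩
  rw [← hprod]
  nth_rw 1 [← Finset.map_orderEmbOfFin_univ S hcard]
  rw [Finset.prod_map]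
  rfl

section ParityLift

variable {R : Type*} [CommRing R]

/-- The polynomial `X ^ ε * p (X ^ 2 - 1)`. For `ε = 0` and `ε = 1` these are the even and the odd
polynomials, written in the variable `x ^ 2 - 1`, which maps `(-1, 1)` to `[-1, 0)`. -/
noncomputable def parityLift (ε : ℕ) : R[X] →ₗ[R] R[X] :=
  LinearMap.mulLeft R (X ^ ε) ∘ₗ (aeval (X ^ 2 - 1 : R[X])).toLinearMap

theorem parityLift_apply (ε : ℕ) (p : R[X]) : parityLift ε p = X ^ ε * p.comp (X ^ 2 - 1) := by
  simp [parityLift, comp, aeval_def, Polynomial.algebraMap_eq]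

theorem parityLift_X_pow (ε k : ℕ) : parityLift ε (X ^ k : R[X]) = X ^ ε * (X ^ 2 - 1) ^ k := by
  rw [parityLift_apply, X_pow_comp]

theorem parityLift_mul_parityLift (ε : ℕ) (p q : R[X]) :
    parityLift ε p * parityLift ε q = parityLift (2 * ε) (p * q) := by
  simp only [parityLift_apply, mul_comp]
  ring

theorem eval_parityLift (ε : ℕ) (p : R[X]) (x : R) :
    (parityLift ε p).eval x = x ^ ε * p.eval (x ^ 2 - 1) := by
  simp [parityLift_apply]

theorem coeff_comp_neg_X (f : R[X]) (k : ℕ) :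
    (f.comp (-X)).coeff k = (-1) ^ k * f.coeff k := by
  rw [show (-X : R[X]) = C (-1) * X by simp, comp_C_mul_X_coeff, mul_comm]

variable [IsDomain R]

theorem leadingCoeff_parityLift (ε : ℕ) (p : R[X]) :
    (parityLift ε p).leadingCoeff = p.leadingCoeff := by
  have hdeg : (X ^ 2 - 1 : R[X]).natDegree = 2 := by compute_degree!
  have hmonic : (X ^ 2 - 1 : R[X]).Monic := by monicity!
  simp [parityLift_apply, leadingCoeff_comp, hdeg, hmonic.leadingCoeff]

theorem parityLift_ne_zero (ε : ℕ) {p : R[X]} (hp : p ≠ 0) : parityLift ε p ≠ 0 := by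
  rwa [← leadingCoeff_ne_zero, leadingCoeff_parityLift, leadingCoeff_ne_zero]

theorem natDegree_parityLift (ε : ℕ) {p : R[X]} (hp : p ≠ 0) :
    (parityLift ε p).natDegree = 2 * p.natDegree + ε := by
  have hdeg : (X ^ 2 - 1 : R[X]).natDegree = 2 := by compute_degree!
  have hcomp : p.comp (X ^ 2 - 1) ≠ 0 := by simpa [parityLift_apply] using parityLift_ne_zero 0 hp
  rw [parityLift_apply, natDegree_X_pow_mul _ hcomp, natDegree_comp, hdeg]
  ring

theorem degree_parityLift_lt (ε : ℕ) {p q : R[X]} (h : p.natDegree < q.natDegree) :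
    (parityLift ε p).degree < (parityLift ε q).natDegree := by
  rcases eq_or_ne p 0 with rfl | hp
  · simp
  · have hq : q ≠ 0 := ne_zero_of_natDegree_gt h
    refine degree_le_natDegree.trans_lt (Nat.cast_lt.mpr ?_)
    rw [natDegree_parityLift ε hp, natDegree_parityLift ε hq]
    omega

variable [CharZero R]

theorem exists_eq_parityLift_zero {f : R[X]} (hf : f.comp (-X) = f) :
    ∃ p, f = parityLift 0 p := by
  refine ⟨(contract 2 f).comp (X + 1), ?_⟩
  rw [parityLift_apply, pow_zero, one_mul, comp_assoc, add_comp, X_comp, one_comp, sub_add_cancel,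
    ← expand_eq_comp_X_pow]
  ext k
  rw [coeff_expand two_pos, coeff_contract two_ne_zero]
  split_ifs with hk
  · rw [Nat.div_mul_cancel hk]
  · have hcoeff := coeff_comp_neg_X f k
    rw [hf, (Nat.odd_iff.mpr (by omega)).neg_one_pow, neg_one_mul] at hcoeff
    exact self_eq_neg.mp hcoeff

theorem exists_eq_parityLift_one {f : R[X]} (hf : f.comp (-X) = -f) :
    ∃ p, f = parityLift 1 p := by
  have hcoeff : f.coeff 0 = 0 := by
    have := coeff_comp_neg_X f 0
    rw [hf, coeff_neg, pow_zero, one_mul] at this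
    exact neg_eq_self.mp this
  obtain ⟨g, rfl⟩ := X_dvd_iff.mpr hcoeff
  rw [mul_comp, X_comp, neg_mul, neg_inj] at hf
  obtain ⟨p, rfl⟩ := exists_eq_parityLift_zero (mul_left_cancel₀ X_ne_zero hf)
  exact ⟨p, by simp [parityLift_apply]⟩

theorem exists_eq_parityLift {f : R[X]} {n : ℕ} (hf : (-1) ^ n * f.comp (-X) = f) :
    ∃ ε ≤ 1, ∃ p, f = parityLift ε p := by
  rcases n.even_or_odd with hn | hn
  · rw [hn.neg_one_pow, one_mul] at hf
    exact ⟨0, zero_le_one, exists_eq_parityLift_zero hf⟩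
  · rw [hn.neg_one_pow, neg_one_mul, neg_eq_iff_eq_neg] at hf
    exact ⟨1, le_rfl, exists_eq_parityLift_one hf⟩

theorem exists_finset_sq_sub_one_mem {B : Finset ℝ} (hB : ∀ b ∈ B, -1 < b) :
    ∃ S : Finset ℝ, S.card = B.card ∧ ∀ x ∈ S, 0 < x ∧ x ^ 2 - 1 ∈ B := by
  have hpos : ∀ b ∈ B, 0 < 1 + b := fun b hb ↦ by linarith [hB b hb]
  refine ⟨B.image fun b ↦ √(1 + b), Finset.card_image_of_injOn fun b hb c hc hbc ↦ ?_, ?_⟩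
  · simpa [Real.sqrt_inj (hpos b hb).le (hpos c hc).le] using hbc
  · refine Finset.forall_mem_image.mpr fun b hb ↦ ⟨sqrt_pos.mpr (hpos b hb), ?_⟩
    simpa [sq_sqrt (hpos b hb).le] using hb

theorem exists_finset_roots_parityLift_prod {ε : ℕ} (hε : ε ≤ 1) {B : Finset ℝ}
    (hB : ∀ b ∈ B, -1 < b) :
    ∃ R : Finset ℝ, R.card = 2 * B.card + ε ∧
      ∀ x ∈ R, (parityLift ε (∏ b ∈ B, (X - C b))).eval x = 0 := by
  classical
  obtain ⟨S, hcard, hS⟩ := exists_finset_sq_sub_one_mem hB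
  have heval : ∀ x, x ^ 2 - 1 ∈ B → (parityLift ε (∏ b ∈ B, (X - C b))).eval x = 0 := fun x hx ↦ by
    rw [eval_parityLift, eval_prod, Finset.prod_eq_zero hx (by simp), mul_zero]
  have hdisj : Disjoint S (S.image Neg.neg) := Finset.disjoint_left.mpr fun x hx hx' ↦ by
    obtain ⟨y, hy, rfl⟩ := Finset.mem_image.mp hx'
    linarith [(hS _ hx).1, (hS y hy).1]
  have hpm : (S ∪ S.image Neg.neg).card = 2 * B.card := by
    rw [Finset.card_union_of_disjoint hdisj, Finset.card_image_of_injective _ neg_injective, hcard]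
    ring
  have hroots : ∀ x ∈ S ∪ S.image Neg.neg, x ≠ 0 ∧ x ^ 2 - 1 ∈ B := fun x hx ↦ by
    rcases Finset.mem_union.mp hx with hx | hx
    · exact ⟨(hS x hx).1.ne', (hS x hx).2⟩
    · obtain ⟨y, hy, rfl⟩ := Finset.mem_image.mp hx
      exact ⟨neg_ne_zero.mpr (hS y hy).1.ne', by simpa using (hS y hy).2⟩
  obtain rfl | rfl := Nat.le_one_iff_eq_zero_or_eq_one.mp hε
  · exact ⟨_, hpm, fun x hx ↦ heval x (hroots x hx).2⟩
  · refine ⟨insert 0 (S ∪ S.image Neg.neg), ?_, Finset.forall_mem_insert _ _ _ |>.mpr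
      ⟨by simp [eval_parityLift], fun x hx ↦ heval x (hroots x hx).2⟩⟩
    rw [Finset.card_insert_of_notMem fun h ↦ (hroots 0 h).1 rfl, hpm]

end ParityLift

section Moments

variable {α : ℝ}

theorem derivative_sq_sub_one_pow_succ {R : Type*} [CommRing R] (k : ℕ) :
    derivative ((X ^ 2 - 1 : R[X]) ^ (k + 1)) = 2 * (k + 1 : R[X]) * X * (X ^ 2 - 1) ^ k := by
  rw [derivative_pow_succ, derivative_sub, derivative_X_sq, derivative_one, sub_zero, C_add,
    C_eq_natCast, C_1, C_ofNat]
  ring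

theorem one_sub_sq_mul_derivative_sq_sub_one_pow {R : Type*} [CommRing R] (k : ℕ) :
    (1 - X ^ 2) * derivative ((X ^ 2 - 1 : R[X]) ^ k) =
      -(2 * (k : R[X]) * X * (X ^ 2 - 1) ^ k) := by
  rcases k with _ | k
  · simp
  · rw [derivative_sq_sub_one_pow_succ, Nat.cast_succ]
    ring

theorem exists_derivative_parityLift_X_pow_add_two (α : ℝ) {ε : ℕ} (hε : ε ≤ 1) (k : ℕ) :
    ∃ r : ℝ[X], derivative (parityLift ε (X ^ (k + 2))) = (1 - X ^ 2) * r ∧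
      (1 - X ^ 2) * derivative r - C (2 * α + 1) * X * r =
        ((2 * k + 4) * (2 * k + 1 + 2 * α)) • parityLift ε (X ^ k) +
          ((2 * k + 4 + ε) * (2 * k + 2 + ε + 2 * α)) • parityLift ε (X ^ (k + 1)) := by
  have hW := one_sub_sq_mul_derivative_sq_sub_one_pow (R := ℝ) k
  have hder := derivative_sq_sub_one_pow_succ (R := ℝ) k
  have hder' := derivative_sq_sub_one_pow_succ (R := ℝ) (k + 1)
  have hconst : derivative (2 * k + 4 : ℝ[X]) = 0 := by simp
  rw [Nat.cast_succ] at hder'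
  simp only [parityLift_X_pow, smul_eq_C_mul, C_mul, C_add, C_eq_natCast, C_ofNat, C_1]
  obtain rfl | rfl := Nat.le_one_iff_eq_zero_or_eq_one.mp hε
  · refine ⟨-((2 * k + 4 : ℝ[X]) * X * (X ^ 2 - 1) ^ k), ?_, ?_⟩
    · rw [pow_zero, one_mul, hder']
      ring
    · simp only [derivative_neg, derivative_mul, hconst, derivative_X, Nat.cast_zero]
      linear_combination (-(2 * (k : ℝ[X]) + 4) * X) * hW
  · refine ⟨-((2 * k + 4 : ℝ[X]) * X ^ 2 * (X ^ 2 - 1) ^ k + (X ^ 2 - 1) ^ (k + 1)), ?_, ?_⟩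
    · rw [pow_one, derivative_mul, hder', derivative_X]
      ring
    · simp only [derivative_neg, derivative_add, derivative_mul, hconst, hder, derivative_X_sq,
        C_ofNat, Nat.cast_one]
      linear_combination (-(2 * (k : ℝ[X]) + 4) * X ^ 2) * hW

theorem neg_gegInner_derivative_parityLift_X_pow_add_two (hα : -1 / 2 < α) {ε : ℕ} (hε : ε ≤ 1)
    (f : ℝ[X]) (k : ℕ) :
    -gegInner α (derivative f) (derivative (parityLift ε (X ^ (k + 2)))) =
      (2 * k + 4) * (2 * k + 1 + 2 * α) * gegInner α f (parityLift ε (X ^ k)) +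
        (2 * k + 4 + ε) * (2 * k + 2 + ε + 2 * α) *
          gegInner α f (parityLift ε (X ^ (k + 1))) := by
  obtain ⟨r, hder, hr⟩ := exists_derivative_parityLift_X_pow_add_two α hε k
  rw [hder, gegInner_derivative_one_sub_sq_mul hα, neg_neg, hr]
  simp only [← gegIntegral_mul hα]
  rw [mul_add f, map_add, mul_smul_comm, map_smul, mul_smul_comm, map_smul, smul_eq_mul,
    smul_eq_mul]

theorem neg_gegInner_derivative_parityLift_one_X (hα : -1 / 2 < α) (f : ℝ[X]) :
    -gegInner α (derivative f) (derivative (parityLift 1 X)) =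
      -2 * gegInner α (derivative f) (derivative (parityLift 1 1)) +
        3 * (2 * α + 1) * gegInner α f (parityLift 1 1) := by
  have hone : parityLift 1 (1 : ℝ[X]) = X := by simp [parityLift_apply]
  have hder : derivative (parityLift 1 X) =
      (2 : ℝ) • derivative (parityLift 1 (1 : ℝ[X])) + (1 - X ^ 2) * (-3) := by
    rw [hone, parityLift_apply, X_comp, pow_one, derivative_mul, derivative_X, derivative_sub,
      derivative_X_sq, derivative_one, smul_eq_C_mul, C_ofNat]
    ring
  have hr : (1 - X ^ 2) * derivative (-3) - C (2 * α + 1) * X * (-3) =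
      (3 * (2 * α + 1)) • parityLift 1 1 := by
    rw [hone, derivative_neg, derivative_ofNat, smul_eq_C_mul, C_mul, C_ofNat]
    ring
  have hparts := gegInner_derivative_one_sub_sq_mul hα f (-3)
  rw [hr] at hparts
  simp only [← gegIntegral_mul hα] at hparts ⊢
  rw [mul_smul_comm, map_smul, smul_eq_mul] at hparts
  rw [hder, mul_add (derivative f), map_add, hparts, mul_smul_comm, map_smul, smul_eq_mul]
  ring

/-- The functional `p ↦ -lam * ⟨Q', P'⟩`, where `P` is the lift of `p`. If `Q` is the
Gegenbauer–Sobolev polynomial, its value is `⟨Q, P⟩` whenever `P` has smaller degree than `Q`. -/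
noncomputable def derivativeFunctional (hα : -1 / 2 < α) (lam : ℝ) (ε : ℕ) (Q : ℝ[X]) :
    ℝ[X] →ₗ[ℝ] ℝ :=
  -lam • gegIntegral hα ∘ₗ LinearMap.mulLeft ℝ (derivative Q) ∘ₗ derivative ∘ₗ parityLift ε

theorem derivativeFunctional_apply (hα : -1 / 2 < α) (lam : ℝ) (ε : ℕ) (Q p : ℝ[X]) :
    derivativeFunctional hα lam ε Q p =
      -lam * gegInner α (derivative Q) (derivative (parityLift ε p)) := by
  simp [derivativeFunctional, gegIntegral_mul]

theorem gegInner_eq_derivativeFunctional (hα : -1 / 2 < α) {lam : ℝ} {ε : ℕ} {Q p : ℝ[X]}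
    (h : sobInner α lam Q (parityLift ε p) = 0) :
    gegInner α Q (parityLift ε p) = derivativeFunctional hα lam ε Q p := by
  rw [derivativeFunctional_apply, neg_mul]
  exact eq_neg_of_add_eq_zero_left h

theorem derivativeFunctional_X_pow_add_two (hα : -1 / 2 < α) (lam : ℝ) {ε : ℕ} (hε : ε ≤ 1)
    (Q : ℝ[X]) (k : ℕ) :
    derivativeFunctional hα lam ε Q (X ^ (k + 2)) =
      lam * ((2 * k + 4) * (2 * k + 1 + 2 * α)) * gegInner α Q (parityLift ε (X ^ k)) +
        lam * ((2 * k + 4 + ε) * (2 * k + 2 + ε + 2 * α)) *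
          gegInner α Q (parityLift ε (X ^ (k + 1))) := by
  rw [derivativeFunctional_apply, neg_mul_comm,
    neg_gegInner_derivative_parityLift_X_pow_add_two hα hε]
  ring

theorem derivativeFunctional_one_mul_X_nonneg (hα : -1 / 2 < α) {lam : ℝ} (hlam : 0 ≤ lam) {ε : ℕ}
    (hε : ε ≤ 1) {Q : ℝ[X]} (h : sobInner α lam Q (parityLift ε 1) = 0) :
    0 ≤ derivativeFunctional hα lam ε Q 1 * derivativeFunctional hα lam ε Q X := by
  obtain rfl | rfl := Nat.le_one_iff_eq_zero_or_eq_one.mp hε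
  · simp [derivativeFunctional_apply, parityLift_apply, gegInner]
  · have hrec : derivativeFunctional hα lam 1 Q X =
        (2 + 3 * lam * (2 * α + 1)) * derivativeFunctional hα lam 1 Q 1 := by
      rw [add_mul, ← gegInner_eq_derivativeFunctional hα h, derivativeFunctional_apply,
        neg_mul_comm, neg_gegInner_derivative_parityLift_one_X hα,
        gegInner_eq_derivativeFunctional hα h, derivativeFunctional_apply]
      ring
    have hcoeff : 0 ≤ 2 + 3 * lam * (2 * α + 1) := by
      have : 0 < 2 * α + 1 := by linarith
      positivity
    rw [hrec, mul_left_comm]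
    exact mul_nonneg hcoeff (mul_self_nonneg _)

theorem derivativeFunctional_X_pow_sameSign (hα : -1 / 2 < α) {lam : ℝ} (hlam : 0 ≤ lam) {ε m : ℕ}
    (hε : ε ≤ 1) {Q : ℝ[X]} (h : ∀ k < m, sobInner α lam Q (parityLift ε (X ^ k)) = 0) :
    (∀ k ≤ m, 0 ≤ derivativeFunctional hα lam ε Q (X ^ k)) ∨
      ∀ k ≤ m, derivativeFunctional hα lam ε Q (X ^ k) ≤ 0 := by
  refine sameSign_of_recurrence (a := fun k ↦ lam * ((2 * k + 4) * (2 * k + 1 + 2 * α)))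
    (b := fun k ↦ lam * ((2 * k + 4 + ε) * (2 * k + 2 + ε + 2 * α))) (fun k ↦ ?_) (fun k ↦ ?_)
    (fun hm ↦ ?_) fun k hk ↦ ?_
  · have : 0 < 2 * (k : ℝ) + 1 + 2 * α := by linarith [(k.cast_nonneg : (0 : ℝ) ≤ k)]
    positivity
  · have : 0 < 2 * (k : ℝ) + 2 + ε + 2 * α := by
      linarith [(k.cast_nonneg : (0 : ℝ) ≤ k), (ε.cast_nonneg : (0 : ℝ) ≤ ε)]
    positivity
  · simpa using derivativeFunctional_one_mul_X_nonneg hα hlam hε (by simpa using h 0 hm)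
  · rw [derivativeFunctional_X_pow_add_two hα lam hε,
      gegInner_eq_derivativeFunctional hα (h k (by omega)),
      gegInner_eq_derivativeFunctional hα (h (k + 1) (by omega))]

theorem isPositiveOn_gegIntegral_comp_parityLift (hα : -1 / 2 < α) (ε : ℕ) :
    IsPositiveOn (gegIntegral hα ∘ₗ parityLift (2 * ε)) (Ioo (-1) 0) := by
  intro p hp hpos
  refine isPositiveOn_gegIntegral hα _ (parityLift_ne_zero _ hp) fun x hx ↦ ?_
  have hpos' := le_on_closure hpos continuousOn_const p.continuousOn
  rw [closure_Ioo (by norm_num)] at hpos'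
  have hx' : x ^ 2 - 1 ∈ Icc (-1 : ℝ) 0 := ⟨by linarith [sq_nonneg x], by nlinarith [hx.1, hx.2]⟩
  rw [eval_parityLift, pow_mul]
  exact mul_nonneg (pow_nonneg (sq_nonneg x) ε) (hpos' hx')

end Moments

section GegenbauerSobolev

variable {α lam : ℝ} {n : ℕ}

theorem sobInner_sub_left (hα : -1 / 2 < α) (f g h : ℝ[X]) :
    sobInner α lam (f - g) h = sobInner α lam f h - sobInner α lam g h := by
  simp only [sobInner, ← gegIntegral_mul hα, sub_mul, map_sub]
  ring

theorem sobInner_neg_left (f g : ℝ[X]) : sobInner α lam (-f) g = -sobInner α lam f g := by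
  simp only [sobInner, gegInner, eval_neg, neg_mul, integral_neg, derivative_neg, mul_neg]
  ring

theorem sobInner_self_pos (hα : -1 / 2 < α) (hlam : 0 ≤ lam) {f : ℝ[X]} (hf : f ≠ 0) :
    0 < sobInner α lam f f :=
  add_pos_of_pos_of_nonneg (gegInner_self_pos hα hf) (mul_nonneg hlam (gegInner_self_nonneg hα _))

theorem sobInner_comp_neg_X (f g : ℝ[X]) :
    sobInner α lam (f.comp (-X)) (g.comp (-X)) = sobInner α lam f g := by
  have hder (p : ℝ[X]) : derivative (p.comp (-X)) = (-derivative p).comp (-X) := by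
    simp [derivative_comp]
  rw [sobInner, hder, hder, gegInner_comp_neg_X, gegInner_comp_neg_X, sobInner]
  simp [gegInner]

theorem IsMonicGegSobolev.unique (hα : -1 / 2 < α) (hlam : 0 ≤ lam) {Q R : ℝ[X]}
    (hQ : IsMonicGegSobolev α lam n Q) (hR : IsMonicGegSobolev α lam n R) : Q = R := by
  have degree_eq {P : ℝ[X]} (hP : IsMonicGegSobolev α lam n P) : P.degree = n :=
    (degree_eq_iff_natDegree_eq hP.1.ne_zero).mpr hP.2.1
  have hlt : (Q - R).degree < n := degree_eq hQ ▸
    degree_sub_lt_left ((degree_eq hQ).trans (degree_eq hR).symm) hQ.1.ne_zero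
      (hQ.1.leadingCoeff.trans hR.1.leadingCoeff.symm)
  by_contra hne
  refine (sobInner_self_pos hα hlam (sub_ne_zero.mpr hne)).ne' ?_
  rw [sobInner_sub_left hα, hQ.2.2 _ hlt, hR.2.2 _ hlt, sub_zero]

theorem IsMonicGegSobolev.neg_one_pow_mul_comp_neg_X {Q : ℝ[X]}
    (hQ : IsMonicGegSobolev α lam n Q) :
    IsMonicGegSobolev α lam n ((-1) ^ n * Q.comp (-X)) := by
  obtain ⟨hmonic, rfl, horth⟩ := hQ
  refine ⟨hmonic.neg_one_pow_natDegree_mul_comp_neg_X, ?_, fun p hp ↦ ?_⟩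
  · rcases neg_one_pow_eq_or ℝ[X] Q.natDegree with h | h <;> simp [h, natDegree_comp]
  · have hQp : sobInner α lam (Q.comp (-X)) p = 0 := by
      rw [← comp_neg_X_comp_neg_X p, sobInner_comp_neg_X]
      exact horth _ (degree_comp_neg_X.trans_lt hp)
    rcases neg_one_pow_eq_or ℝ[X] Q.natDegree with h | h <;> simp [h, sobInner_neg_left, hQp]

theorem IsMonicGegSobolev.exists_eq_prod_X_sub_C (hα : -1 / 2 < α) (hlam : 0 ≤ lam) {ε : ℕ}
    (hε : ε ≤ 1) {q : ℝ[X]} (hQ : IsMonicGegSobolev α lam n (parityLift ε q)) :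
    ∃ B : Finset ℝ, (∀ b ∈ B, -1 < b) ∧ q = ∏ b ∈ B, (X - C b) := by
  obtain ⟨hmonic, rfl, horth⟩ := hQ
  have hq : q.Monic := (leadingCoeff_parityLift ε q).symm.trans hmonic
  have horth' (p : ℝ[X]) (hp : p.natDegree < q.natDegree) :
      sobInner α lam (parityLift ε q) (parityLift ε p) = 0 := horth _ (degree_parityLift_lt ε hp)
  refine exists_eq_prod_X_sub_C_of_moments_sameSign (N := derivativeFunctional hα lam ε
    (parityLift ε q)) (by norm_num) (isPositiveOn_gegIntegral_comp_parityLift hα ε) hq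
    (fun p hp ↦ ?_) ?_ (derivativeFunctional_X_pow_sameSign hα hlam hε fun k hk ↦
      horth' _ (by rwa [natDegree_X_pow]))
  · rw [← gegInner_eq_derivativeFunctional hα (horth' p hp), ← gegIntegral_mul hα,
      parityLift_mul_parityLift, LinearMap.comp_apply]
  · rw [derivativeFunctional_apply]
    exact mul_nonpos_of_nonpos_of_nonneg (neg_nonpos.mpr hlam) (gegInner_self_nonneg hα _)

end GegenbauerSobolev

/-- The zeros of the monic Gegenbauer–Sobolev polynomial are real and simple:
`Q` splits into `n` distinct real linear factors. -/
theorem gegSobolev_zeros_real_simple (α lam : ℝ) (hα : -1/2 < α) (hlam : 0 ≤ lam)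
    (n : ℕ) (hn : 1 ≤ n)
    (Q : Polynomial ℝ) (hQ : IsMonicGegSobolev α lam n Q) :
    ∃ r : Fin n → ℝ, StrictMono r ∧ Q = ∏ i, (X - Polynomial.C (r i)) := by
  have hparity : (-1) ^ n * Q.comp (-X) = Q := hQ.neg_one_pow_mul_comp_neg_X.unique hα hlam hQ
  obtain ⟨ε, hε, q, rfl⟩ := exists_eq_parityLift hparity
  obtain ⟨B, hB, rfl⟩ := hQ.exists_eq_prod_X_sub_C hα hlam hε
  obtain ⟨R, hcard, hR⟩ := exists_finset_roots_parityLift_prod hε hB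
  obtain ⟨hmonic, hdeg, -⟩ := hQ
  refine exists_strictMono_eq_prod_X_sub_C hmonic hR ?_ hdeg
  rw [hcard, ← hdeg, natDegree_parityLift ε (monic_prod_X_sub_C _ _).ne_zero]
  simp
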